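/- arXiv:1810.10269 — 3 statements merged into one kernel-verified Lean document; each statement's English description precedes it below -/
import Mathlib

section
/- Let a < b be real numbers, let ρ, EI : [a,b] → ℝ be continuous and positive, and let ω : [0,T] × [a,b] → ℂ be such that the partial derivatives ω_t, ω_tt, ω_ζζ, ω_tζ, ω_tζζ exist and are continuous, ζ ↦ (EI(ζ) ω_ζζ(t,ζ)) is twice continuously differentiable in ζ with (EI ω_ζζ)_ζ and (EI ω_ζζ)_ζζ continuous on [0,T] × [a,b], and ρ(ζ) ω_tt(t,ζ) + (EI(ζ) ω_ζζ(t,ζ))_ζζ = 0 for all (t,ζ) ∈ [0,T] × (a,b). Define the energy H(t) := (1/2) ∫_a^b ( ρ(ζ) |ω_t(t,ζ)|² + EI(ζ) |ω_ζζ(t,ζ)|² ) dζ. Then H is differentiable on [0,T] and H′(t) = Re[ −(EI ω_ζζ)_ζ(t,b) · conj(ω_t(t,b)) + (EI ω_ζζ)(t,b) · conj(ω_tζ(t,b)) ] − Re[ −(EI ω_ζζ)_ζ(t,a) · conj(ω_t(t,a)) + (EI ω_ζζ)(t,a) · conj(ω_tζ(t,a)) ]. -/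
/-!
The energy is differentiated under the integral sign. This gives
`H' = ∫ ρ Re(ω_tt conj ω_t) + EI Re(ω_ζζ conj ω_tζζ)`, and by the beam equation the integrand is the
`ζ`-derivative of `Re(-(EI ω_ζζ)_ζ conj ω_t + EI ω_ζζ conj ω_tζ)` on `(a, b)`, so the fundamental
theorem of calculus produces the boundary terms.

The hypotheses only provide `ω_tζζ` as the iterated derivative `(ω_t)_ζζ`, whereas differentiating
the energy needs `(ω_ζζ)_t`. The two agree by `hasDerivWithinAt_swap`, applied first to `ω` and then
to `ω_ζ`: writing `f(s, ζ) = f(0, ζ) + ∫₀ˢ f_t(r, ζ) dr`, differentiation under the integral gives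
`f_ζ(s, ζ) = f_ζ(0, ζ) + ∫₀ˢ f_tζ(r, ζ) dr`, which can be differentiated in `s`.

Derivatives are one-sided at the endpoints of the time interval, so differentiation under the
integral sign on a closed interval (`hasDerivWithinAt_integral`) is derived from Fubini's theorem.
-/

open Set MeasureTheory

section Calculus

/-- A continuous function on a closed rectangle extends continuously to the plane. -/
lemma exists_continuous_extension_rectangle {X : Type*} [TopologicalSpace X]
    {c d a b : ℝ} (hcd : c ≤ d) (hab : a ≤ b) {F : ℝ → ℝ → X}
    (hF : ContinuousOn (fun p : ℝ × ℝ => F p.1 p.2) (Icc c d ×ˢ Icc a b)) :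
    ∃ G : ℝ → ℝ → X, Continuous (Function.uncurry G) ∧
      ∀ r ∈ Icc c d, ∀ ζ ∈ Icc a b, G r ζ = F r ζ := by
  refine ⟨fun r ζ => F (projIcc c d hcd r) (projIcc a b hab ζ), ?_, ?_⟩
  · refine hF.comp_continuous
      (f := fun p : ℝ × ℝ => ((projIcc c d hcd p.1 : ℝ), (projIcc a b hab p.2 : ℝ))) ?_ ?_
    · exact (continuous_subtype_val.comp (continuous_projIcc.comp continuous_fst)).prodMk
        (continuous_subtype_val.comp (continuous_projIcc.comp continuous_snd))
    · exact fun p => ⟨(projIcc c d hcd p.1).2, (projIcc a b hab p.2).2⟩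
  · intro r hr ζ hζ
    simp only [projIcc_of_mem hcd hr, projIcc_of_mem hab hζ]

variable {E : Type*} [NormedAddCommGroup E] [NormedSpace ℝ E] [CompleteSpace E]

lemma integral_eq_sub_of_hasDerivWithinAt_Icc {c d : ℝ} (hcd : c ≤ d) {f f' : ℝ → E}
    (hf : ∀ x ∈ Icc c d, HasDerivWithinAt f (f' x) (Icc c d) x)
    (hf' : ContinuousOn f' (Icc c d)) : ∫ x in c..d, f' x = f d - f c :=
  intervalIntegral.integral_eq_sub_of_hasDerivAt_of_le hcd
    (fun x hx => (hf x hx).continuousWithinAt)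
    (fun x hx => (hf x (Ioo_subset_Icc_self hx)).hasDerivAt (Icc_mem_nhds hx.1 hx.2))
    (hf'.intervalIntegrable_of_Icc hcd)

/-- Taylor's formula of order zero on an initial segment of `[c, d]`. -/
lemma eq_add_integral_of_hasDerivWithinAt_Icc {c d s : ℝ} (hs : s ∈ Icc c d) {f f' : ℝ → E}
    (hf : ∀ x ∈ Icc c d, HasDerivWithinAt f (f' x) (Icc c d) x)
    (hf' : ContinuousOn f' (Icc c d)) : f s = f c + ∫ x in c..s, f' x := by
  have hsub : Icc c s ⊆ Icc c d := Icc_subset_Icc_right hs.2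
  rw [integral_eq_sub_of_hasDerivWithinAt_Icc hs.1 (fun x hx => (hf x (hsub hx)).mono hsub)
    (hf'.mono hsub)]
  abel

lemma hasDerivWithinAt_primitive_Icc {c d t : ℝ} (ht : t ∈ Icc c d) {h : ℝ → E}
    (hh : ContinuousOn h (Icc c d)) :
    HasDerivWithinAt (fun s => ∫ r in c..s, h r) (h t) (Icc c d) t := by
  have : Fact (t ∈ Icc c d) := ⟨ht⟩
  exact intervalIntegral.integral_hasDerivWithinAt_right
    ((hh.mono (Icc_subset_Icc_right ht.2)).intervalIntegrable_of_Icc ht.1)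
    (hh.stronglyMeasurableAtFilter_nhdsWithin measurableSet_Icc t) (hh t ht)

/-- Differentiation under the integral sign, with one-sided derivatives at the endpoints. -/
lemma hasDerivWithinAt_integral {c d a b t : ℝ} (hab : a ≤ b) (ht : t ∈ Icc c d)
    {F F' : ℝ → ℝ → E}
    (hF : ∀ s ∈ Icc c d, ContinuousOn (F s) (Icc a b))
    (hderiv : ∀ s ∈ Icc c d, ∀ ζ ∈ Icc a b,
      HasDerivWithinAt (fun s => F s ζ) (F' s ζ) (Icc c d) s)
    (hF' : ContinuousOn (fun p : ℝ × ℝ => F' p.1 p.2) (Icc c d ×ˢ Icc a b)) :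
    HasDerivWithinAt (fun s => ∫ ζ in a..b, F s ζ) (∫ ζ in a..b, F' t ζ) (Icc c d) t := by
  have hcd : c ≤ d := ht.1.trans ht.2
  obtain ⟨G, hG, hGF⟩ := exists_continuous_extension_rectangle hcd hab hF'
  have hGint : Continuous fun r => ∫ ζ in a..b, G r ζ :=
    intervalIntegral.continuous_parametric_intervalIntegral_of_continuous' hG a b
  have hrep : ∀ s ∈ Icc c d,
      ∫ ζ in a..b, F s ζ = (∫ ζ in a..b, F c ζ) + ∫ r in c..s, ∫ ζ in a..b, G r ζ := by
    intro s hs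
    have hswap : ∫ r in c..s, ∫ ζ in a..b, G r ζ = ∫ ζ in a..b, ∫ r in c..s, G r ζ := by
      refine intervalIntegral_intervalIntegral_swap ?_
      exact (hG.continuousOn.integrableOn_compact
        (isCompact_uIcc.prod isCompact_uIcc)).mono_set
          (prod_mono uIoc_subset_uIcc uIoc_subset_uIcc)
    have hpoint : ∀ ζ ∈ Icc a b, F s ζ - F c ζ = ∫ r in c..s, G r ζ := by
      intro ζ hζ
      have h := eq_add_integral_of_hasDerivWithinAt_Icc hs
        (f := fun s => F s ζ) (f' := fun s => G s ζ)
        (fun x hx => by simpa only [hGF x hx ζ hζ] using hderiv x hx ζ hζ)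
        (hG.comp (continuous_id.prodMk continuous_const)).continuousOn
      exact sub_eq_of_eq_add' h
    rw [hswap, ← sub_eq_iff_eq_add', ← intervalIntegral.integral_sub
      ((hF s hs).intervalIntegrable_of_Icc hab)
      ((hF c (left_mem_Icc.2 hcd)).intervalIntegrable_of_Icc hab)]
    refine intervalIntegral.integral_congr fun ζ hζ => ?_
    rw [uIcc_of_le hab] at hζ
    exact hpoint ζ hζ
  have hval : ∫ ζ in a..b, F' t ζ = ∫ ζ in a..b, G t ζ := by
    refine intervalIntegral.integral_congr fun ζ hζ => ?_
    rw [uIcc_of_le hab] at hζ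
    exact (hGF t ht ζ hζ).symm
  rw [hval]
  exact ((hasDerivWithinAt_primitive_Icc ht hGint.continuousOn).const_add _).congr
    hrep (hrep t ht)

/-- Symmetry of mixed partial derivatives on a rectangle: if `f_t = g` and `g_ζ = f_tζ` is jointly
continuous, then `(f_ζ)_t` exists and equals `f_tζ`, one-sidedly on the boundary. -/
lemma hasDerivWithinAt_swap {a b T : ℝ} (hab : a < b) {f g fz gz : ℝ → ℝ → E}
    (hft : ∀ t ∈ Icc (0:ℝ) T, ∀ ζ ∈ Icc a b,
      HasDerivWithinAt (fun s => f s ζ) (g t ζ) (Icc (0:ℝ) T) t)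
    (hfz : ∀ t ∈ Icc (0:ℝ) T, ∀ ζ ∈ Icc a b,
      HasDerivWithinAt (fun y => f t y) (fz t ζ) (Icc a b) ζ)
    (hgz : ∀ t ∈ Icc (0:ℝ) T, ∀ ζ ∈ Icc a b,
      HasDerivWithinAt (fun y => g t y) (gz t ζ) (Icc a b) ζ)
    (hg : ContinuousOn (fun p : ℝ × ℝ => g p.1 p.2) (Icc (0:ℝ) T ×ˢ Icc a b))
    (hgzc : ContinuousOn (fun p : ℝ × ℝ => gz p.1 p.2) (Icc (0:ℝ) T ×ˢ Icc a b)) :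
    ∀ t ∈ Icc (0:ℝ) T, ∀ ζ ∈ Icc a b,
      HasDerivWithinAt (fun s => fz s ζ) (gz t ζ) (Icc (0:ℝ) T) t := by
  intro t ht ζ hζ
  have h0 : (0:ℝ) ∈ Icc (0:ℝ) T := left_mem_Icc.2 (ht.1.trans ht.2)
  have hslice : ∀ {k : ℝ → ℝ → E},
      ContinuousOn (fun p : ℝ × ℝ => k p.1 p.2) (Icc (0:ℝ) T ×ˢ Icc a b) →
      ∀ y ∈ Icc a b, ContinuousOn (fun r => k r y) (Icc (0:ℝ) T) := fun hk y hy =>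
    hk.comp (f := fun r : ℝ => (r, y)) (by fun_prop) fun r hr => ⟨hr, hy⟩
  have hrep : ∀ s ∈ Icc (0:ℝ) T, fz s ζ = fz 0 ζ + ∫ r in (0:ℝ)..s, gz r ζ := by
    intro s hs
    have hsub : Icc 0 s ⊆ Icc 0 T := Icc_subset_Icc_right hs.2
    have hint : HasDerivWithinAt (fun y => ∫ r in (0:ℝ)..s, g r y)
        (∫ r in (0:ℝ)..s, gz r ζ) (Icc a b) ζ :=
      hasDerivWithinAt_integral (F := fun y r => g r y) (F' := fun y r => gz r y) hs.1 hζ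
        (fun y hy => (hslice hg y hy).mono hsub)
        (fun y hy r hr => hgz r (hsub hr) y hy)
        (hgzc.comp (f := fun p : ℝ × ℝ => (p.2, p.1)) (by fun_prop)
          fun p hp => ⟨hsub hp.2, hp.1⟩)
    have hf : ∀ y ∈ Icc a b, f s y = f 0 y + ∫ r in (0:ℝ)..s, g r y := fun y hy =>
      eq_add_integral_of_hasDerivWithinAt_Icc (f := fun s => f s y) hs
        (fun x hx => hft x hx y hy) (hslice hg y hy)
    exact (uniqueDiffOn_Icc hab ζ hζ).eq_deriv (Icc a b) (hfz s hs ζ hζ)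
      (((hfz 0 h0 ζ hζ).add hint).congr hf (hf ζ hζ))
  exact ((hasDerivWithinAt_primitive_Icc ht (hslice hgzc ζ hζ)).const_add _).congr
    hrep (hrep t ht)

end Calculus

/-- Power balance for a single inhomogeneous Euler–Bernoulli beam on
`[a,b]`: for a classical solution of `ρ ω_tt + (EI ω_ζζ)_ζζ = 0`, the energy
`H(t) = (1/2) ∫_a^b (ρ |ω_t|² + EI |ω_ζζ|²)` is differentiable on `[0,T]` with
`H′(t) = Re[-(EI ω_ζζ)_ζ(t,b) conj(ω_t(t,b)) + (EI ω_ζζ)(t,b) conj(ω_tζ(t,b))]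
       - Re[-(EI ω_ζζ)_ζ(t,a) conj(ω_t(t,a)) + (EI ω_ζζ)(t,a) conj(ω_tζ(t,a))]`. -/
theorem stmt0 (a b T : ℝ) (hab : a < b)
    (ρ EI : ℝ → ℝ)
    (hρc : ContinuousOn ρ (Icc a b)) (hEIc : ContinuousOn EI (Icc a b))
    (hρpos : ∀ ζ ∈ Icc a b, 0 < ρ ζ) (hEIpos : ∀ ζ ∈ Icc a b, 0 < EI ζ)
    (ω ωt ωtt ωz ωzz ωtz ωtzz Mz Mzz : ℝ → ℝ → ℂ)
    (hωt : ∀ t ∈ Icc (0:ℝ) T, ∀ ζ ∈ Icc a b,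
      HasDerivWithinAt (fun s => ω s ζ) (ωt t ζ) (Icc (0:ℝ) T) t)
    (hωtt : ∀ t ∈ Icc (0:ℝ) T, ∀ ζ ∈ Icc a b,
      HasDerivWithinAt (fun s => ωt s ζ) (ωtt t ζ) (Icc (0:ℝ) T) t)
    (hωz : ∀ t ∈ Icc (0:ℝ) T, ∀ ζ ∈ Icc a b,
      HasDerivWithinAt (fun y => ω t y) (ωz t ζ) (Icc a b) ζ)
    (hωzz : ∀ t ∈ Icc (0:ℝ) T, ∀ ζ ∈ Icc a b,
      HasDerivWithinAt (fun y => ωz t y) (ωzz t ζ) (Icc a b) ζ)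
    (hωtz : ∀ t ∈ Icc (0:ℝ) T, ∀ ζ ∈ Icc a b,
      HasDerivWithinAt (fun y => ωt t y) (ωtz t ζ) (Icc a b) ζ)
    (hωtzz : ∀ t ∈ Icc (0:ℝ) T, ∀ ζ ∈ Icc a b,
      HasDerivWithinAt (fun y => ωtz t y) (ωtzz t ζ) (Icc a b) ζ)
    (hMz : ∀ t ∈ Icc (0:ℝ) T, ∀ ζ ∈ Icc a b,
      HasDerivWithinAt (fun y => (EI y : ℂ) * ωzz t y) (Mz t ζ) (Icc a b) ζ)
    (hMzz : ∀ t ∈ Icc (0:ℝ) T, ∀ ζ ∈ Icc a b,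
      HasDerivWithinAt (fun y => Mz t y) (Mzz t ζ) (Icc a b) ζ)
    (cont_ωt : ContinuousOn (fun p : ℝ × ℝ => ωt p.1 p.2) (Icc (0:ℝ) T ×ˢ Icc a b))
    (cont_ωtt : ContinuousOn (fun p : ℝ × ℝ => ωtt p.1 p.2) (Icc (0:ℝ) T ×ˢ Icc a b))
    (cont_ωzz : ContinuousOn (fun p : ℝ × ℝ => ωzz p.1 p.2) (Icc (0:ℝ) T ×ˢ Icc a b))
    (cont_ωtz : ContinuousOn (fun p : ℝ × ℝ => ωtz p.1 p.2) (Icc (0:ℝ) T ×ˢ Icc a b))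
    (cont_ωtzz : ContinuousOn (fun p : ℝ × ℝ => ωtzz p.1 p.2) (Icc (0:ℝ) T ×ˢ Icc a b))
    (cont_Mz : ContinuousOn (fun p : ℝ × ℝ => Mz p.1 p.2) (Icc (0:ℝ) T ×ˢ Icc a b))
    (cont_Mzz : ContinuousOn (fun p : ℝ × ℝ => Mzz p.1 p.2) (Icc (0:ℝ) T ×ˢ Icc a b))
    (pde : ∀ t ∈ Icc (0:ℝ) T, ∀ ζ ∈ Ioo a b,
      (ρ ζ : ℂ) * ωtt t ζ + Mzz t ζ = 0) :
    ∀ t ∈ Icc (0:ℝ) T,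
      HasDerivWithinAt
        (fun s => (1 / 2 : ℝ) * ∫ ζ in a..b, (ρ ζ * ‖ωt s ζ‖ ^ 2 + EI ζ * ‖ωzz s ζ‖ ^ 2))
        ((-(Mz t b) * star (ωt t b) + (EI b : ℂ) * ωzz t b * star (ωtz t b)).re
          - (-(Mz t a) * star (ωt t a) + (EI a : ℂ) * ωzz t a * star (ωtz t a)).re)
        (Icc (0:ℝ) T) t := by

  intro t ht
  have hωzzt : ∀ t ∈ Icc (0:ℝ) T, ∀ ζ ∈ Icc a b,
      HasDerivWithinAt (fun s => ωzz s ζ) (ωtzz t ζ) (Icc (0:ℝ) T) t :=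
    hasDerivWithinAt_swap hab (hasDerivWithinAt_swap hab hωt hωz hωtz cont_ωt cont_ωtz)
      hωzz hωtzz cont_ωtz cont_ωtzz
  have hslice : ∀ {k : ℝ → ℝ → ℂ},
      ContinuousOn (fun p : ℝ × ℝ => k p.1 p.2) (Icc (0:ℝ) T ×ˢ Icc a b) →
      ∀ s ∈ Icc (0:ℝ) T, ContinuousOn (fun y => k s y) (Icc a b) := fun hk s hs =>
    hk.comp (f := fun y : ℝ => (s, y)) (by fun_prop) fun y hy => ⟨hs, hy⟩
  have hρ2 : ContinuousOn (fun p : ℝ × ℝ => ρ p.2) (Icc (0:ℝ) T ×ˢ Icc a b) :=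
    hρc.comp continuousOn_snd fun p hp => hp.2
  have hEI2 : ContinuousOn (fun p : ℝ × ℝ => EI p.2) (Icc (0:ℝ) T ×ˢ Icc a b) :=
    hEIc.comp continuousOn_snd fun p hp => hp.2
  have hH := hasDerivWithinAt_integral hab.le ht
    (F := fun s ζ => ρ ζ * ‖ωt s ζ‖ ^ 2 + EI ζ * ‖ωzz s ζ‖ ^ 2)
    (F' := fun s ζ => ρ ζ * (2 * inner ℝ (ωt s ζ) (ωtt s ζ))
      + EI ζ * (2 * inner ℝ (ωzz s ζ) (ωtzz s ζ)))
    (fun s hs => (hρc.mul ((hslice cont_ωt s hs).norm.pow 2)).add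
      (hEIc.mul ((hslice cont_ωzz s hs).norm.pow 2)))
    (fun s hs ζ hζ => ((hωtt s hs ζ hζ).norm_sq.const_mul _).add
      ((hωzzt s hs ζ hζ).norm_sq.const_mul _))
    ((hρ2.mul (continuousOn_const.mul (cont_ωt.inner cont_ωtt))).add
      (hEI2.mul (continuousOn_const.mul (cont_ωzz.inner cont_ωtzz))))
  have hflux : ∀ ζ ∈ Icc a b, HasDerivWithinAt
      (fun y => (-(Mz t y) * star (ωt t y) + (EI y : ℂ) * ωzz t y * star (ωtz t y)).re)
      ((-(Mzz t ζ) * star (ωt t ζ) + (EI ζ : ℂ) * ωzz t ζ * star (ωtzz t ζ)).re)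
      (Icc a b) ζ := by
    intro ζ hζ
    have h := ((hMzz t ht ζ hζ).neg.mul (hωtz t ht ζ hζ).star).add
      ((hMz t ht ζ hζ).mul (hωtzz t ht ζ hζ).star)
    have h' := (Complex.reCLM.hasFDerivAt.comp_hasDerivWithinAt ζ h)
    refine h'.congr_deriv ?_
    simp only [Complex.reCLM_apply, Pi.neg_apply]
    congr 1
    ring
  have hfluxc : ContinuousOn
      (fun ζ => (-(Mzz t ζ) * star (ωt t ζ) + (EI ζ : ℂ) * ωzz t ζ * star (ωtzz t ζ)).re)
      (Icc a b) := by
    refine Complex.continuous_re.comp_continuousOn ?_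
    exact ((hslice cont_Mzz t ht).neg.mul (hslice cont_ωt t ht).star).add
      (((Complex.continuous_ofReal.comp_continuousOn hEIc).mul (hslice cont_ωzz t ht)).mul
        (hslice cont_ωtzz t ht).star)
  refine (hH.const_mul (1 / 2 : ℝ)).congr_deriv ?_
  rw [← integral_eq_sub_of_hasDerivWithinAt_Icc hab.le hflux hfluxc,
    ← intervalIntegral.integral_const_mul]
  -- The equation holds on the open interval only, which suffices as endpoints are null.
  refine intervalIntegral.integral_congr_Ioo_of_le hab.le fun ζ hζ => ?_
  have hM : Mzz t ζ = -((ρ ζ : ℂ) * ωtt t ζ) := eq_neg_of_add_eq_zero_right (pde t ht ζ hζ)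
  simp only [hM, Complex.inner, Complex.add_re, Complex.mul_re, Complex.neg_re, Complex.neg_im,
    Complex.mul_im, Complex.ofReal_re, Complex.ofReal_im, Complex.star_def, Complex.conj_re,
    Complex.conj_im]
  ring
end

section
/- Let ω = (ω^1, …, ω^m) be a classical solution of the Euler–Bernoulli chain on [0,T] satisfying: (D) at ζ = 0 there is a matrix K₀ ∈ ℂ^{2×2} with positive semidefinite Hermitian part He(K₀) = (K₀ + K₀*)/2 such that ((EI ω¹_ζζ)(t,0), −(EI ω¹_ζζ)_ζ(t,0)) = K₀ (ω¹_tζ(t,0), ω¹_t(t,0)) for all t; (C) at ζ = L one of the four conservative conditions holds for all t: (1) ω^m_t(t,L) = 0 and (EI ω^m_ζζ)(t,L) = 0, or (2) ω^m_ζζ(t,L) = 0 and (EI ω^m_ζζ)_ζ(t,L) = 0, or (3) ω^m_tζ(t,L) = 0 and (EI ω^m_ζζ)_ζ(t,L) = 0, or (4) ω^m_t(t,L) = 0 and ω^m_tζ(t,L) = 0; (I) at each junction l^j (j = 1,…,m−1) there is a matrix K^j ∈ ℂ^{2×2} with positive semidefinite Hermitian part such that one of the four interconnection variants holds for all t: (a)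 ω_t and ω_tζ are continuous across l^j and (−(EIω_ζζ)_ζ(t,l^j−) + (EIω_ζζ)_ζ(t,l^j+), (EIω_ζζ)(t,l^j−) − (EIω_ζζ)(t,l^j+)) = −K^j (ω_t(t,l^j), ω_tζ(t,l^j)); (b) ω_t and EIω_ζζ are continuous across l^j and (−(EIω_ζζ)_ζ(t,l^j−) + (EIω_ζζ)_ζ(t,l^j+), ω_tζ(t,l^j−) − ω_tζ(t,l^j+)) = −K^j (ω_t(t,l^j), (EIω_ζζ)(t,l^j)); (c) (EIω_ζζ)_ζ and ω_tζ are continuous across l^j and (ω_t(t,l^j−) − ω_t(t,l^j+), (EIω_ζζ)(t,l^j−) − (EIω_ζζ)(t,l^j+)) = −K^j (−(EIω_ζζ)_ζ(t,l^j), ω_tζ(t,l^j)); (d) (EIω_ζζ)_ζ and EIω_ζζ are continuous across l^j and (ω_t(t,l^j−) − ω_t(t,l^j+), ω_tζ(t,l^j−) − ω_tζ(t,l^j+)) = −K^j (−(EIω_ζζ)_ζ(t,l^j), (EIω_ζζ)(t,l^j)). Then the total energy H is differentiable and non-increasing; more precisely, with b(t) := (ω¹_tζ(t,0), ω¹_t(t,0))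 ∈ ℂ², H′(t) ≤ −Re⟨K₀ b(t), b(t)⟩_{ℂ²} ≤ 0 for all t ∈ [0,T]. -/
/-!
The proof is the classical energy balance.

* The deflection satisfies `ω(t) - ω(0) = ∫₀ᵗ ω_t`. Differentiating this identity twice in space
  under the integral sign gives `ω_ζζ(t) - ω_ζζ(0) = ∫₀ᵗ ω_tζζ`, hence `∂_t ω_ζζ = ω_tζζ`
  (`EBSolution.hasDerivWithinAt_ωzz`).
* The energy of each beam may therefore be differentiated under the integral sign. By the beam
  equation the derivative of the density is twice the space derivative of the flux
  `F = Re(-(EI ω_ζζ)_ζ conj ω_t + EI ω_ζζ conj ω_tζ)`, so the energy of a beam changes at the rate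
  `F(right end) - F(left end)` (`EBSolution.hasDerivWithinAt_beam`).
* Summing over the beams and regrouping the fluxes by nodes: the flux at `ζ = L` vanishes
  (`EBSolution.flux_right`), the jump of the flux at a junction equals `-Re⟨K v, v⟩ ≤ 0`
  (`EBSolution.flux_junction`), and the flux at `ζ = 0` equals `Re⟨K₀ b, b⟩`.
-/

open Set Filter Matrix MeasureTheory
open scoped ComplexOrder

noncomputable section

/-- Data for a chain of `m` serially connected Euler–Bernoulli beams on `[0,L]`:
a partition `0 = l⁰ < l¹ < … < lᵐ = L` and coefficient functions `ρ, EI` which are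
bounded, uniformly positive and Lipschitz continuous on each open subinterval. -/
structure EBData (m : ℕ) where
  l : ℕ → ℝ
  L : ℝ
  rho : ℝ → ℝ
  EI : ℝ → ℝ
  one_le_m : 1 ≤ m
  l_zero : l 0 = 0
  l_last : l m = L
  l_lt : ∀ j < m, l j < l (j + 1)
  eps : ℝ
  eps_pos : 0 < eps
  rho_lb : ∀ ζ ∈ Icc (0 : ℝ) L, eps ≤ rho ζ
  EI_lb : ∀ ζ ∈ Icc (0 : ℝ) L, eps ≤ EI ζ
  rho_bdd : ∃ C : ℝ, ∀ ζ ∈ Icc (0 : ℝ) L, rho ζ ≤ C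
  EI_bdd : ∃ C : ℝ, ∀ ζ ∈ Icc (0 : ℝ) L, EI ζ ≤ C
  rho_lip : ∀ j < m, ∃ K : NNReal, LipschitzOnWith K rho (Ioo (l j) (l (j + 1)))
  EI_lip : ∀ j < m, ∃ K : NNReal, LipschitzOnWith K EI (Ioo (l j) (l (j + 1)))

/-- A classical solution of the Euler–Bernoulli chain, for times in the set `S`.
Beam `j` (0-indexed, `j = 0, …, m-1`) lives on `[l j, l (j+1)]`; `ω j` is its deflection,
and the fields `ωt, ωtt, ωz, ωzz, ωtz, ωtzz` are its partial derivatives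
(`t` = time, `z` = space).  `Mom j = EI · ω_ζζ` is the bending moment of beam `j`
(continuously extended to the closed subinterval), and `Mz, Mzz` are its first and second
spatial derivatives.  All the derivatives required of a classical solution exist and are
continuous, and the Euler–Bernoulli equation `ρ ω_tt + (EI ω_ζζ)_ζζ = 0` holds on each
open subinterval. -/
structure EBSolution {m : ℕ} (d : EBData m) (S : Set ℝ) where
  ω : ℕ → ℝ → ℝ → ℂ
  ωt : ℕ → ℝ → ℝ → ℂ
  ωtt : ℕ → ℝ → ℝ → ℂ
  ωz : ℕ → ℝ → ℝ → ℂ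
  ωzz : ℕ → ℝ → ℝ → ℂ
  ωtz : ℕ → ℝ → ℝ → ℂ
  ωtzz : ℕ → ℝ → ℝ → ℂ
  Mom : ℕ → ℝ → ℝ → ℂ
  Mz : ℕ → ℝ → ℝ → ℂ
  Mzz : ℕ → ℝ → ℝ → ℂ
  hωt : ∀ j < m, ∀ t ∈ S, ∀ ζ ∈ Icc (d.l j) (d.l (j + 1)),
    HasDerivWithinAt (fun s => ω j s ζ) (ωt j t ζ) S t
  hωtt : ∀ j < m, ∀ t ∈ S, ∀ ζ ∈ Icc (d.l j) (d.l (j + 1)),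
    HasDerivWithinAt (fun s => ωt j s ζ) (ωtt j t ζ) S t
  hωz : ∀ j < m, ∀ t ∈ S, ∀ ζ ∈ Icc (d.l j) (d.l (j + 1)),
    HasDerivWithinAt (fun y => ω j t y) (ωz j t ζ) (Icc (d.l j) (d.l (j + 1))) ζ
  hωzz : ∀ j < m, ∀ t ∈ S, ∀ ζ ∈ Icc (d.l j) (d.l (j + 1)),
    HasDerivWithinAt (fun y => ωz j t y) (ωzz j t ζ) (Icc (d.l j) (d.l (j + 1))) ζ
  hωtz : ∀ j < m, ∀ t ∈ S, ∀ ζ ∈ Icc (d.l j) (d.l (j + 1)),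
    HasDerivWithinAt (fun y => ωt j t y) (ωtz j t ζ) (Icc (d.l j) (d.l (j + 1))) ζ
  hωtzz : ∀ j < m, ∀ t ∈ S, ∀ ζ ∈ Icc (d.l j) (d.l (j + 1)),
    HasDerivWithinAt (fun y => ωtz j t y) (ωtzz j t ζ) (Icc (d.l j) (d.l (j + 1))) ζ
  hMom : ∀ j < m, ∀ t ∈ S, ∀ ζ ∈ Ioo (d.l j) (d.l (j + 1)),
    Mom j t ζ = (d.EI ζ : ℂ) * ωzz j t ζ
  hMz : ∀ j < m, ∀ t ∈ S, ∀ ζ ∈ Icc (d.l j) (d.l (j + 1)),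
    HasDerivWithinAt (fun y => Mom j t y) (Mz j t ζ) (Icc (d.l j) (d.l (j + 1))) ζ
  hMzz : ∀ j < m, ∀ t ∈ S, ∀ ζ ∈ Icc (d.l j) (d.l (j + 1)),
    HasDerivWithinAt (fun y => Mz j t y) (Mzz j t ζ) (Icc (d.l j) (d.l (j + 1))) ζ
  cont_ωt : ∀ j < m,
    ContinuousOn (fun p : ℝ × ℝ => ωt j p.1 p.2) (S ×ˢ Icc (d.l j) (d.l (j + 1)))
  cont_ωtt : ∀ j < m,
    ContinuousOn (fun p : ℝ × ℝ => ωtt j p.1 p.2) (S ×ˢ Icc (d.l j) (d.l (j + 1)))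
  cont_ωzz : ∀ j < m,
    ContinuousOn (fun p : ℝ × ℝ => ωzz j p.1 p.2) (S ×ˢ Icc (d.l j) (d.l (j + 1)))
  cont_ωtz : ∀ j < m,
    ContinuousOn (fun p : ℝ × ℝ => ωtz j p.1 p.2) (S ×ˢ Icc (d.l j) (d.l (j + 1)))
  cont_ωtzz : ∀ j < m,
    ContinuousOn (fun p : ℝ × ℝ => ωtzz j p.1 p.2) (S ×ˢ Icc (d.l j) (d.l (j + 1)))
  cont_Mom : ∀ j < m,
    ContinuousOn (fun p : ℝ × ℝ => Mom j p.1 p.2) (S ×ˢ Icc (d.l j) (d.l (j + 1)))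
  cont_Mz : ∀ j < m,
    ContinuousOn (fun p : ℝ × ℝ => Mz j p.1 p.2) (S ×ˢ Icc (d.l j) (d.l (j + 1)))
  cont_Mzz : ∀ j < m,
    ContinuousOn (fun p : ℝ × ℝ => Mzz j p.1 p.2) (S ×ˢ Icc (d.l j) (d.l (j + 1)))
  pde : ∀ j < m, ∀ t ∈ S, ∀ ζ ∈ Ioo (d.l j) (d.l (j + 1)),
    (d.rho ζ : ℂ) * ωtt j t ζ + Mzz j t ζ = 0

/-- The total energy `H(t)` of the chain of beams. -/
def energy {m : ℕ} {d : EBData m} {S : Set ℝ} (sol : EBSolution d S) (t : ℝ) : ℝ :=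
  (1 / 2 : ℝ) * ∑ j ∈ Finset.range m,
    ∫ ζ in (d.l j)..(d.l (j + 1)),
      (d.rho ζ * ‖sol.ωt j t ζ‖ ^ 2 + d.EI ζ * ‖sol.ωzz j t ζ‖ ^ 2)

/-- The boundary flux term
`F(t,ζ) = Re[ -(EI ω_ζζ)_ζ conj(ω_t) + (EI ω_ζζ) conj(ω_tζ) ]` evaluated on beam `j`. -/
def flux {m : ℕ} {d : EBData m} {S : Set ℝ} (sol : EBSolution d S) (j : ℕ) (t ζ : ℝ) : ℝ :=
  (-(sol.Mz j t ζ) * star (sol.ωt j t ζ) + sol.Mom j t ζ * star (sol.ωtz j t ζ)).re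

/-- The boundary trace vector `b(t) = (ω¹_tζ(t,0), ω¹_t(t,0))` at the left end. -/
def bvec {m : ℕ} {d : EBData m} {S : Set ℝ} (sol : EBSolution d S) (t : ℝ) : Fin 2 → ℂ :=
  ![sol.ωtz 0 t 0, sol.ωt 0 t 0]

/-- Condition (D): boundary feedback at the left end `ζ = 0` via the matrix `K₀`:
`((EI ω¹_ζζ)(t,0), −(EI ω¹_ζζ)_ζ(t,0)) = K₀ (ω¹_tζ(t,0), ω¹_t(t,0))`. -/
def condD {m : ℕ} {d : EBData m} {S : Set ℝ} (sol : EBSolution d S)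
    (K₀ : Matrix (Fin 2) (Fin 2) ℂ) : Prop :=
  ∀ t ∈ S, ![sol.Mom 0 t 0, -(sol.Mz 0 t 0)] = K₀.mulVec (bvec sol t)

/-- (C1): pinned right end: `ω^m_t(t,L) = 0` and `(EI ω^m_ζζ)(t,L) = 0`. -/
def condC1 {m : ℕ} {d : EBData m} {S : Set ℝ} (sol : EBSolution d S) : Prop :=
  ∀ t ∈ S, sol.ωt (m - 1) t d.L = 0 ∧ sol.Mom (m - 1) t d.L = 0

/-- (C2): free right end: `ω^m_ζζ(t,L) = 0` and `(EI ω^m_ζζ)_ζ(t,L) = 0`. -/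
def condC2 {m : ℕ} {d : EBData m} {S : Set ℝ} (sol : EBSolution d S) : Prop :=
  ∀ t ∈ S, sol.ωzz (m - 1) t d.L = 0 ∧ sol.Mz (m - 1) t d.L = 0

/-- (C3): shear hinge right end: `ω^m_tζ(t,L) = 0` and `(EI ω^m_ζζ)_ζ(t,L) = 0`. -/
def condC3 {m : ℕ} {d : EBData m} {S : Set ℝ} (sol : EBSolution d S) : Prop :=
  ∀ t ∈ S, sol.ωtz (m - 1) t d.L = 0 ∧ sol.Mz (m - 1) t d.L = 0

/-- (C4): clamped right end: `ω^m_t(t,L) = 0` and `ω^m_tζ(t,L) = 0`. -/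
def condC4 {m : ℕ} {d : EBData m} {S : Set ℝ} (sol : EBSolution d S) : Prop :=
  ∀ t ∈ S, sol.ωt (m - 1) t d.L = 0 ∧ sol.ωtz (m - 1) t d.L = 0

/-- Junction variant (a) at the junction `l^j` (`1 ≤ j ≤ m-1`, left beam `j-1`, right
beam `j`): `ω_t` and `ω_tζ` continuous, and
`(−(EIω_ζζ)_ζ(l^j−) + (EIω_ζζ)_ζ(l^j+), (EIω_ζζ)(l^j−) − (EIω_ζζ)(l^j+))
  = −K (ω_t(l^j), ω_tζ(l^j))`. -/
def junctionA {m : ℕ} {d : EBData m} {S : Set ℝ} (sol : EBSolution d S)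
    (K : Matrix (Fin 2) (Fin 2) ℂ) (j : ℕ) : Prop :=
  ∀ t ∈ S,
    sol.ωt (j - 1) t (d.l j) = sol.ωt j t (d.l j) ∧
    sol.ωtz (j - 1) t (d.l j) = sol.ωtz j t (d.l j) ∧
    ![-(sol.Mz (j - 1) t (d.l j)) + sol.Mz j t (d.l j),
        sol.Mom (j - 1) t (d.l j) - sol.Mom j t (d.l j)]
      = -(K.mulVec ![sol.ωt (j - 1) t (d.l j), sol.ωtz (j - 1) t (d.l j)])

/-- Junction variant (b): `ω_t` and `EI ω_ζζ` continuous, and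
`(−(EIω_ζζ)_ζ(l^j−) + (EIω_ζζ)_ζ(l^j+), ω_tζ(l^j−) − ω_tζ(l^j+))
  = −K (ω_t(l^j), (EIω_ζζ)(l^j))`. -/
def junctionB {m : ℕ} {d : EBData m} {S : Set ℝ} (sol : EBSolution d S)
    (K : Matrix (Fin 2) (Fin 2) ℂ) (j : ℕ) : Prop :=
  ∀ t ∈ S,
    sol.ωt (j - 1) t (d.l j) = sol.ωt j t (d.l j) ∧
    sol.Mom (j - 1) t (d.l j) = sol.Mom j t (d.l j) ∧
    ![-(sol.Mz (j - 1) t (d.l j)) + sol.Mz j t (d.l j),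
        sol.ωtz (j - 1) t (d.l j) - sol.ωtz j t (d.l j)]
      = -(K.mulVec ![sol.ωt (j - 1) t (d.l j), sol.Mom (j - 1) t (d.l j)])

/-- Junction variant (c): `(EIω_ζζ)_ζ` and `ω_tζ` continuous, and
`(ω_t(l^j−) − ω_t(l^j+), (EIω_ζζ)(l^j−) − (EIω_ζζ)(l^j+))
  = −K (−(EIω_ζζ)_ζ(l^j), ω_tζ(l^j))`. -/
def junctionC {m : ℕ} {d : EBData m} {S : Set ℝ} (sol : EBSolution d S)
    (K : Matrix (Fin 2) (Fin 2) ℂ) (j : ℕ) : Prop :=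
  ∀ t ∈ S,
    sol.Mz (j - 1) t (d.l j) = sol.Mz j t (d.l j) ∧
    sol.ωtz (j - 1) t (d.l j) = sol.ωtz j t (d.l j) ∧
    ![sol.ωt (j - 1) t (d.l j) - sol.ωt j t (d.l j),
        sol.Mom (j - 1) t (d.l j) - sol.Mom j t (d.l j)]
      = -(K.mulVec ![-(sol.Mz (j - 1) t (d.l j)), sol.ωtz (j - 1) t (d.l j)])

/-- Junction variant (d): `(EIω_ζζ)_ζ` and `EI ω_ζζ` continuous, and
`(ω_t(l^j−) − ω_t(l^j+), ω_tζ(l^j−) − ω_tζ(l^j+))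
  = −K (−(EIω_ζζ)_ζ(l^j), (EIω_ζζ)(l^j))`. -/
def junctionD {m : ℕ} {d : EBData m} {S : Set ℝ} (sol : EBSolution d S)
    (K : Matrix (Fin 2) (Fin 2) ℂ) (j : ℕ) : Prop :=
  ∀ t ∈ S,
    sol.Mz (j - 1) t (d.l j) = sol.Mz j t (d.l j) ∧
    sol.Mom (j - 1) t (d.l j) = sol.Mom j t (d.l j) ∧
    ![sol.ωt (j - 1) t (d.l j) - sol.ωt j t (d.l j),
        sol.ωtz (j - 1) t (d.l j) - sol.ωtz j t (d.l j)]
      = -(K.mulVec ![-(sol.Mz (j - 1) t (d.l j)), sol.Mom (j - 1) t (d.l j)])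

/-! ### Differentiation under the integral sign -/

/-- Differentiation under a weighted interval integral, up to the boundary of the parameter
interval. The weight only has to be integrable; the difference quotients of `g` are bounded
uniformly, by the mean value inequality and compactness. -/
lemma hasDerivWithinAt_integral_smul {E : Type*} [NormedAddCommGroup E] [NormedSpace ℝ E]
    {a b c e : ℝ} (hce : c ≤ e) {w : ℝ → ℝ} (hw : IntervalIntegrable w volume c e)
    {g g' : ℝ → ℝ → E} (hg : ∀ x ∈ Icc a b, ContinuousOn (g x) (Icc c e))
    (hd : ∀ x ∈ Icc a b, ∀ y ∈ Icc c e,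
      HasDerivWithinAt (fun s => g s y) (g' x y) (Icc a b) x)
    (hg' : ContinuousOn (fun p : ℝ × ℝ => g' p.1 p.2) (Icc a b ×ˢ Icc c e))
    {x : ℝ} (hx : x ∈ Icc a b) :
    HasDerivWithinAt (fun s => ∫ y in c..e, w y • g s y) (∫ y in c..e, w y • g' x y)
      (Icc a b) x := by
  obtain ⟨C, hC⟩ := (isCompact_Icc.prod isCompact_Icc).exists_bound_of_continuousOn hg'
  have hint : ∀ s ∈ Icc a b, IntervalIntegrable (fun y => w y • g s y) volume c e :=
    fun s hs => hw.smul_continuousOn (by rw [uIcc_of_le hce]; exact hg s hs)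
  rw [hasDerivWithinAt_iff_tendsto_slope]
  have hmem : ∀ᶠ s in nhdsWithin x (Icc a b \ {x}), s ∈ Icc a b \ {x} := self_mem_nhdsWithin
  have key : Tendsto (fun s => ∫ y in c..e, w y • slope (fun s => g s y) x s)
      (nhdsWithin x (Icc a b \ {x})) (nhds (∫ y in c..e, w y • g' x y)) := by
    apply intervalIntegral.tendsto_integral_filter_of_dominated_convergence (fun y => |w y| * C)
    · filter_upwards [hmem] with s hs
      have h1 := ((hint s hs.1).sub (hint x hx)).smul (s - x)⁻¹
      refine h1.def'.aestronglyMeasurable.congr (Eventually.of_forall fun y => ?_)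
      simp only [slope, vsub_eq_sub, Pi.smul_apply]
      rw [← smul_sub, smul_comm]
    · filter_upwards [hmem] with s hs
      refine Eventually.of_forall fun y hy => ?_
      rw [uIoc_of_le hce] at hy
      have hy' := Ioc_subset_Icc_self hy
      have hsx : 0 < ‖s - x‖ := norm_pos_iff.2 (sub_ne_zero.2 hs.2)
      have h2 := (convex_Icc a b).norm_image_sub_le_of_norm_hasDerivWithin_le
        (fun z hz => hd z hz y hy') (fun z hz => hC (z, y) ⟨hz, hy'⟩) hx hs.1
      rw [norm_smul, Real.norm_eq_abs]
      refine mul_le_mul_of_nonneg_left ?_ (abs_nonneg _)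
      rw [slope, vsub_eq_sub, norm_smul, norm_inv, inv_mul_le_iff₀ hsx, mul_comm]
      exact h2
    · exact hw.abs.mul_const C
    · refine Eventually.of_forall fun y hy => ?_
      rw [uIoc_of_le hce] at hy
      exact ((hasDerivWithinAt_iff_tendsto_slope.1
        (hd x hx y (Ioc_subset_Icc_self hy))).const_smul (w y))
  refine key.congr' ?_
  filter_upwards [hmem] with s hs
  rw [slope, vsub_eq_sub, ← intervalIntegral.integral_sub (hint s hs.1) (hint x hx),
    ← intervalIntegral.integral_smul]
  refine intervalIntegral.integral_congr fun y _ => ?_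
  simp only [slope, vsub_eq_sub]
  rw [← smul_sub, smul_comm]

lemma continuousOn_section_left {E : Type*} [TopologicalSpace E] {f : ℝ → ℝ → E} {A B : Set ℝ}
    (hf : ContinuousOn (fun p : ℝ × ℝ => f p.1 p.2) (A ×ˢ B)) {t : ℝ} (ht : t ∈ A) :
    ContinuousOn (f t) B :=
  hf.comp (f := fun y => (t, y)) (by fun_prop) fun _ hy => ⟨ht, hy⟩

lemma continuousOn_section_right {E : Type*} [TopologicalSpace E] {f : ℝ → ℝ → E} {A B : Set ℝ}
    (hf : ContinuousOn (fun p : ℝ × ℝ => f p.1 p.2) (A ×ˢ B)) {y : ℝ} (hy : y ∈ B) :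
    ContinuousOn (fun t => f t y) A :=
  hf.comp (f := fun t => (t, y)) (by fun_prop) fun _ ht => ⟨ht, hy⟩

/-- A space derivative commutes with the integral over `[0, t]`. -/
lemma hasDerivWithinAt_integral_time {a b T : ℝ} {g g' : ℝ → ℝ → ℂ}
    (hg : ContinuousOn (fun p : ℝ × ℝ => g p.1 p.2) (Icc 0 T ×ˢ Icc a b))
    (hg' : ContinuousOn (fun p : ℝ × ℝ => g' p.1 p.2) (Icc 0 T ×ˢ Icc a b))
    (hd : ∀ t ∈ Icc (0 : ℝ) T, ∀ y ∈ Icc a b, HasDerivWithinAt (g t) (g' t y) (Icc a b) y)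
    {t : ℝ} (ht : t ∈ Icc 0 T) {y : ℝ} (hy : y ∈ Icc a b) :
    HasDerivWithinAt (fun z => ∫ r in (0 : ℝ)..t, g r z) (∫ r in (0 : ℝ)..t, g' r y)
      (Icc a b) y := by
  have hsub : Icc 0 t ⊆ Icc 0 T := Icc_subset_Icc_right ht.2
  have h := hasDerivWithinAt_integral_smul (a := a) (b := b) (c := 0) (e := t) (w := fun _ => 1)
    (g := fun z r => g r z) (g' := fun z r => g' r z) ht.1 intervalIntegrable_const
    (fun z hz => (continuousOn_section_right hg hz).mono hsub)
    (fun z hz r hr => hd r (hsub hr) z hz)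
    (hg'.comp (f := fun p : ℝ × ℝ => (p.2, p.1)) (by fun_prop) fun p hp => ⟨hsub hp.2, hp.1⟩) hy
  simpa using h

/-! ### Integrability of the coefficients -/

lemma EBData.l_nonneg_le {m : ℕ} (d : EBData m) {j : ℕ} (hj : j ≤ m) :
    0 ≤ d.l j ∧ d.l j ≤ d.L := by
  constructor
  · induction j with
    | zero => exact d.l_zero.ge
    | succ k ih => exact (ih (by omega)).trans (d.l_lt k (by omega)).le
  · induction hj using Nat.decreasingInduction with
    | self => exact d.l_last.le
    | of_succ k hk ih => exact (d.l_lt k hk).le.trans ih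

lemma EBData.Icc_subset {m : ℕ} (d : EBData m) {j : ℕ} (hj : j < m) :
    Icc (d.l j) (d.l (j + 1)) ⊆ Icc 0 d.L :=
  Icc_subset_Icc (d.l_nonneg_le hj.le).1 (d.l_nonneg_le (Nat.succ_le_of_lt hj)).2

/-- A function continuous on an open interval and bounded there is integrable up to the ends,
whatever its values at the two end points are. -/
lemma intervalIntegrable_of_Ioo {f : ℝ → ℝ} {a b C : ℝ} (hab : a ≤ b)
    (hf : ContinuousOn f (Ioo a b)) (hC : ∀ y ∈ Ioo a b, ‖f y‖ ≤ C) :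
    IntervalIntegrable f volume a b := by
  rw [intervalIntegrable_iff_integrableOn_Ioo_of_le hab]
  refine IntegrableOn.of_bound (by simp) (hf.aestronglyMeasurable measurableSet_Ioo) C ?_
  filter_upwards [ae_restrict_mem measurableSet_Ioo] with y hy using hC y hy

lemma EBData.intervalIntegrable_rho {m : ℕ} (d : EBData m) {j : ℕ} (hj : j < m) :
    IntervalIntegrable d.rho volume (d.l j) (d.l (j + 1)) := by
  obtain ⟨K, hK⟩ := d.rho_lip j hj
  obtain ⟨C, hC⟩ := d.rho_bdd
  refine intervalIntegrable_of_Ioo (C := C) (d.l_lt j hj).le hK.continuousOn fun y hy => ?_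
  have hy' := d.Icc_subset hj (Ioo_subset_Icc_self hy)
  rw [Real.norm_of_nonneg (d.eps_pos.le.trans (d.rho_lb y hy'))]
  exact hC y hy'

lemma EBData.intervalIntegrable_EI {m : ℕ} (d : EBData m) {j : ℕ} (hj : j < m) :
    IntervalIntegrable d.EI volume (d.l j) (d.l (j + 1)) := by
  obtain ⟨K, hK⟩ := d.EI_lip j hj
  obtain ⟨C, hC⟩ := d.EI_bdd
  refine intervalIntegrable_of_Ioo (C := C) (d.l_lt j hj).le hK.continuousOn fun y hy => ?_
  have hy' := d.Icc_subset hj (Ioo_subset_Icc_self hy)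
  rw [Real.norm_of_nonneg (d.eps_pos.le.trans (d.EI_lb y hy'))]
  exact hC y hy'

/-! ### Energy balance of a single beam -/

/-- The mixed derivatives commute: `∂_t ω_ζζ = ω_tζζ`. -/
lemma EBSolution.hasDerivWithinAt_ωzz {m : ℕ} {d : EBData m} {T : ℝ}
    (sol : EBSolution d (Icc 0 T)) {j : ℕ} (hj : j < m) {t : ℝ} (ht : t ∈ Icc 0 T)
    {y : ℝ} (hy : y ∈ Icc (d.l j) (d.l (j + 1))) :
    HasDerivWithinAt (fun s => sol.ωzz j s y) (sol.ωtzz j t y) (Icc 0 T) t := by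
  have h0 : (0 : ℝ) ∈ Icc 0 T := ⟨le_rfl, ht.1.trans ht.2⟩
  have hU : UniqueDiffOn ℝ (Icc (d.l j) (d.l (j + 1))) := uniqueDiffOn_Icc (d.l_lt j hj)
  have e0 : ∀ s ∈ Icc 0 T, ∀ z ∈ Icc (d.l j) (d.l (j + 1)),
      ∫ r in (0 : ℝ)..s, sol.ωt j r z = sol.ω j s z - sol.ω j 0 z := by
    intro s hs z hz
    have hsub : Icc 0 s ⊆ Icc 0 T := Icc_subset_Icc_right hs.2
    refine intervalIntegral.integral_eq_sub_of_hasDerivAt_of_le (f := fun r => sol.ω j r z) hs.1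
      (fun r hr => ((sol.hωt j hj r (hsub hr) z hz).continuousWithinAt).mono hsub)
      (fun r hr => (sol.hωt j hj r (hsub (Ioo_subset_Icc_self hr)) z hz).hasDerivAt
        (Icc_mem_nhds hr.1 (hr.2.trans_le hs.2))) ?_
    refine ContinuousOn.intervalIntegrable ?_
    rw [uIcc_of_le hs.1]
    exact (continuousOn_section_right (sol.cont_ωt j hj) hz).mono hsub
  have e1 : ∀ s ∈ Icc 0 T, ∀ z ∈ Icc (d.l j) (d.l (j + 1)),
      ∫ r in (0 : ℝ)..s, sol.ωtz j r z = sol.ωz j s z - sol.ωz j 0 z := by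
    intro s hs z hz
    have h1 := hasDerivWithinAt_integral_time (sol.cont_ωt j hj) (sol.cont_ωtz j hj)
      (sol.hωtz j hj) hs hz
    have h2 := (sol.hωz j hj s hs z hz).sub (sol.hωz j hj 0 h0 z hz)
    exact (hU z hz).eq_deriv _ (h1.congr (fun x hx => (e0 s hs x hx).symm) (e0 s hs z hz).symm) h2
  have e2 : ∀ s ∈ Icc 0 T,
      sol.ωzz j s y = (∫ r in (0 : ℝ)..s, sol.ωtzz j r y) + sol.ωzz j 0 y := by
    intro s hs
    have h1 := hasDerivWithinAt_integral_time (sol.cont_ωtz j hj) (sol.cont_ωtzz j hj)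
      (sol.hωtzz j hj) hs hy
    have h2 := (sol.hωzz j hj s hs y hy).sub (sol.hωzz j hj 0 h0 y hy)
    rw [(hU y hy).eq_deriv _ (h1.congr (fun x hx => (e1 s hs x hx).symm) (e1 s hs y hy).symm) h2]
    ring
  have hc := continuousOn_section_right (sol.cont_ωtzz j hj) hy
  -- the instance search for one-sided derivatives of integrals on `Icc` needs this fact
  have : Fact (t ∈ Icc 0 T) := ⟨ht⟩
  have hI : IntervalIntegrable (fun r => sol.ωtzz j r y) volume 0 t := by
    refine ContinuousOn.intervalIntegrable ?_
    rw [uIcc_of_le ht.1]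
    exact hc.mono (Icc_subset_Icc_right ht.2)
  have h3 := intervalIntegral.integral_hasDerivWithinAt_right (s := Icc 0 T) (t := Icc 0 T) hI
    (hc.stronglyMeasurableAtFilter_nhdsWithin measurableSet_Icc t) (hc t ht)
  exact (h3.add_const (sol.ωzz j 0 y)).congr (fun s hs => e2 s hs) (e2 t ht)

/-- The flux balance of a single beam, obtained by integrating
`∂_ζ F = Re(-(EI ω_ζζ)_ζζ conj ω_t + EI ω_ζζ conj ω_tζζ)`. -/
lemma EBSolution.integral_flux {m : ℕ} {d : EBData m} {T : ℝ}
    (sol : EBSolution d (Icc 0 T)) {j : ℕ} (hj : j < m) {t : ℝ} (ht : t ∈ Icc 0 T) :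
    ∫ y in (d.l j)..(d.l (j + 1)),
      (-(sol.Mzz j t y) * star (sol.ωt j t y) + sol.Mom j t y * star (sol.ωtzz j t y)).re
      = flux sol j t (d.l (j + 1)) - flux sol j t (d.l j) := by
  have hle := (d.l_lt j hj).le
  have cωt := continuousOn_section_left (sol.cont_ωt j hj) ht
  have cωtz := continuousOn_section_left (sol.cont_ωtz j hj) ht
  have cωtzz := continuousOn_section_left (sol.cont_ωtzz j hj) ht
  have cM := continuousOn_section_left (sol.cont_Mom j hj) ht
  have cMz := continuousOn_section_left (sol.cont_Mz j hj) ht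
  have cMzz := continuousOn_section_left (sol.cont_Mzz j hj) ht
  refine intervalIntegral.integral_eq_sub_of_hasDerivAt_of_le (f := fun y => flux sol j t y) hle
    ?_ (fun y hy => ?_) ?_
  · exact Complex.continuous_re.comp_continuousOn
      ((cMz.neg.mul cωt.star).add (cM.mul cωtz.star))
  · have hy' := Ioo_subset_Icc_self hy
    have hn := Icc_mem_nhds hy.1 hy.2
    have dωt := (sol.hωtz j hj t ht y hy').hasDerivAt hn
    have dωtz := (sol.hωtzz j hj t ht y hy').hasDerivAt hn
    have dM := (sol.hMz j hj t ht y hy').hasDerivAt hn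
    have dMz := (sol.hMzz j hj t ht y hy').hasDerivAt hn
    have h := (dMz.neg.mul dωt.star).add (dM.mul dωtz.star)
    have h' := Complex.reCLM.hasFDerivAt.comp_hasDerivAt y h
    refine h'.congr_deriv ?_
    simp only [Complex.reCLM_apply]
    congr 1
    simp only [Pi.neg_apply]
    ring
  · refine ContinuousOn.intervalIntegrable ?_
    rw [uIcc_of_le hle]
    exact Complex.continuous_re.comp_continuousOn
      ((cMzz.neg.mul cωt.star).add (cM.mul cωtzz.star))

/-- Energy balance of a single beam: half the rate of change of
`∫ ρ|ω_t|² + EI|ω_ζζ|²` is the difference of the fluxes at the two ends. -/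
lemma EBSolution.hasDerivWithinAt_beam {m : ℕ} {d : EBData m} {T : ℝ}
    (sol : EBSolution d (Icc 0 T)) {j : ℕ} (hj : j < m) {t : ℝ} (ht : t ∈ Icc 0 T) :
    HasDerivWithinAt (fun s => ∫ y in (d.l j)..(d.l (j + 1)),
        (d.rho y * ‖sol.ωt j s y‖ ^ 2 + d.EI y * ‖sol.ωzz j s y‖ ^ 2))
      (2 * (flux sol j t (d.l (j + 1)) - flux sol j t (d.l j))) (Icc 0 T) t := by
  have hle := (d.l_lt j hj).le
  have iρ := d.intervalIntegrable_rho hj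
  have iE := d.intervalIntegrable_EI hj
  have cωt := sol.cont_ωt j hj
  have cωtt := sol.cont_ωtt j hj
  have cωzz := sol.cont_ωzz j hj
  have cωtzz := sol.cont_ωtzz j hj
  have n1 : ∀ s ∈ Icc 0 T,
      ContinuousOn (fun y => ‖sol.ωt j s y‖ ^ 2) (Icc (d.l j) (d.l (j + 1))) :=
    fun s hs => (continuousOn_section_left cωt hs).norm.pow 2
  have n2 : ∀ s ∈ Icc 0 T,
      ContinuousOn (fun y => ‖sol.ωzz j s y‖ ^ 2) (Icc (d.l j) (d.l (j + 1))) :=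
    fun s hs => (continuousOn_section_left cωzz hs).norm.pow 2
  have c1 : ContinuousOn (fun p : ℝ × ℝ => 2 * inner ℝ (sol.ωt j p.1 p.2) (sol.ωtt j p.1 p.2))
      (Icc 0 T ×ˢ Icc (d.l j) (d.l (j + 1))) := continuousOn_const.mul (cωt.inner cωtt)
  have c2 : ContinuousOn (fun p : ℝ × ℝ => 2 * inner ℝ (sol.ωzz j p.1 p.2) (sol.ωtzz j p.1 p.2))
      (Icc 0 T ×ˢ Icc (d.l j) (d.l (j + 1))) := continuousOn_const.mul (cωzz.inner cωtzz)
  have h1 := hasDerivWithinAt_integral_smul hle iρ n1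
    (fun s hs y hy => (sol.hωtt j hj s hs y hy).norm_sq) c1 ht
  have h2 := hasDerivWithinAt_integral_smul hle iE n2
    (fun s hs y hy => (sol.hasDerivWithinAt_ωzz hj hs hy).norm_sq) c2 ht
  have hu : uIcc (d.l j) (d.l (j + 1)) = Icc (d.l j) (d.l (j + 1)) := uIcc_of_le hle
  have hsum : ∀ s ∈ Icc 0 T, (∫ y in (d.l j)..(d.l (j + 1)),
        (d.rho y * ‖sol.ωt j s y‖ ^ 2 + d.EI y * ‖sol.ωzz j s y‖ ^ 2)) =
      (∫ y in (d.l j)..(d.l (j + 1)), d.rho y • ‖sol.ωt j s y‖ ^ 2) +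
        ∫ y in (d.l j)..(d.l (j + 1)), d.EI y • ‖sol.ωzz j s y‖ ^ 2 := by
    intro s hs
    simp only [smul_eq_mul]
    exact intervalIntegral.integral_add (iρ.mul_continuousOn (by rw [hu]; exact n1 s hs))
      (iE.mul_continuousOn (by rw [hu]; exact n2 s hs))
  refine ((h1.add h2).congr hsum (hsum t ht)).congr_deriv ?_
  rw [← sol.integral_flux hj ht, ← intervalIntegral.integral_const_mul]
  have k1 := continuousOn_section_left (f := fun s y =>
    2 * inner ℝ (sol.ωt j s y) (sol.ωtt j s y)) c1 ht
  have k2 := continuousOn_section_left (f := fun s y =>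
    2 * inner ℝ (sol.ωzz j s y) (sol.ωtzz j s y)) c2 ht
  rw [← intervalIntegral.integral_add
    (iρ.smul_continuousOn (by rw [hu]; exact k1)) (iE.smul_continuousOn (by rw [hu]; exact k2))]
  refine intervalIntegral.integral_congr_Ioo_of_le hle fun y hy => ?_
  have hp : sol.Mzz j t y = -((d.rho y : ℂ) * sol.ωtt j t y) :=
    eq_neg_of_add_eq_zero_right (sol.pde j hj t ht y hy)
  simp only [hp, sol.hMom j hj t ht y hy, smul_eq_mul, Complex.inner, Complex.star_def,
    Complex.add_re, Complex.mul_re, Complex.mul_im, Complex.neg_re, Complex.neg_im,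
    Complex.conj_re, Complex.conj_im, Complex.ofReal_re, Complex.ofReal_im]
  ring

/-! ### Dissipation at the nodes -/

/-- A positive semidefinite Hermitian part makes the quadratic form accretive. -/
lemma re_mulVec_nonneg {K : Matrix (Fin 2) (Fin 2) ℂ}
    (hK : (((1 : ℂ) / 2) • (K + Kᴴ)).PosSemidef) (v : Fin 2 → ℂ) :
    0 ≤ ((K.mulVec v) ⬝ᵥ star v).re := by
  have h := (Complex.le_def.1 (hK.dotProduct_mulVec_nonneg v)).1
  have e : (star v ⬝ᵥ ((((1 : ℂ) / 2) • (K + Kᴴ)) *ᵥ v)).re = ((K.mulVec v) ⬝ᵥ star v).re := by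
    simp [Matrix.mulVec, dotProduct, Fin.sum_univ_two, Matrix.conjTranspose_apply,
      Complex.mul_re, Complex.mul_im]
    ring
  rw [e] at h
  simpa using h

/-- Dissipation inequality at a junction: `x` stands for the jumps, `v` for the values of the
conjugate quantities, which are continuous across the junction. -/
lemma re_pairing_nonpos {K : Matrix (Fin 2) (Fin 2) ℂ}
    (hK : (((1 : ℂ) / 2) • (K + Kᴴ)).PosSemidef) {x₀ x₁ v₀ v₁ : ℂ}
    (h : ![x₀, x₁] = -(K.mulVec ![v₀, v₁])) :
    (x₀ * star v₀ + x₁ * star v₁).re ≤ 0 := by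
  have h1 := re_mulVec_nonneg hK ![v₀, v₁]
  rw [eq_neg_iff_add_eq_zero.2 ((add_comm _ _).trans (eq_neg_iff_add_eq_zero.1 h))] at h1
  simp [dotProduct, Fin.sum_univ_two] at h1 ⊢
  linarith

/-- In each of the four variants the jump `F(l^j-) - F(l^j+)` of the flux is the pairing of the
jumps with the continuous quantities, hence nonpositive. -/
lemma EBSolution.flux_junction {m : ℕ} {d : EBData m} {T : ℝ}
    (sol : EBSolution d (Icc 0 T)) {K : Matrix (Fin 2) (Fin 2) ℂ}
    (hK : (((1 : ℂ) / 2) • (K + Kᴴ)).PosSemidef) {j : ℕ}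
    (hJ : junctionA sol K j ∨ junctionB sol K j ∨ junctionC sol K j ∨ junctionD sol K j)
    {t : ℝ} (ht : t ∈ Icc 0 T) :
    flux sol (j - 1) t (d.l j) - flux sol j t (d.l j) ≤ 0 := by
  rcases hJ with h | h | h | h <;> obtain ⟨h1, h2, h3⟩ := h t ht <;>
  · have h4 := re_pairing_nonpos hK h3
    simp only [flux, ← h1, ← h2]
    simp [Complex.mul_re] at h4 ⊢
    linarith

/-- The moment vanishes at `L` together with `ω_ζζ`. The identity `Mom = EI ω_ζζ` is only known
in the interior of the last beam, so it is passed to the limit using the boundedness of `EI`. -/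
lemma EBSolution.mom_right {m : ℕ} {d : EBData m} {T : ℝ}
    (sol : EBSolution d (Icc 0 T)) {n : ℕ} (hn : n < m) {t : ℝ} (ht : t ∈ Icc 0 T)
    (h : sol.ωzz n t (d.l (n + 1)) = 0) : sol.Mom n t (d.l (n + 1)) = 0 := by
  have hlt := d.l_lt n hn
  have hR : d.l (n + 1) ∈ Icc (d.l n) (d.l (n + 1)) := ⟨hlt.le, le_rfl⟩
  have cM := (continuousOn_section_left (sol.cont_Mom n hn) ht _ hR).mono Ioo_subset_Icc_self
  have cω := (continuousOn_section_left (sol.cont_ωzz n hn) ht _ hR).mono Ioo_subset_Icc_self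
  obtain ⟨C, hC⟩ := d.EI_bdd
  have hne : (nhdsWithin (d.l (n + 1)) (Ioo (d.l n) (d.l (n + 1)))).NeBot :=
    right_nhdsWithin_Ioo_neBot hlt
  refine tendsto_nhds_unique cM ?_
  have hz : Tendsto (fun y => C * ‖sol.ωzz n t y‖)
      (nhdsWithin (d.l (n + 1)) (Ioo (d.l n) (d.l (n + 1)))) (nhds 0) := by
    have := cω.norm.tendsto.const_mul C
    simpa [h] using this
  refine squeeze_zero_norm' ?_ hz
  filter_upwards [self_mem_nhdsWithin] with y hy
  have hy' := d.Icc_subset hn (Ioo_subset_Icc_self hy)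
  rw [sol.hMom n hn t ht y hy, norm_mul, Complex.norm_real,
    Real.norm_of_nonneg (d.eps_pos.le.trans (d.EI_lb y hy'))]
  exact mul_le_mul_of_nonneg_right (hC y hy') (norm_nonneg _)

lemma EBSolution.flux_right {m : ℕ} {d : EBData m} {T : ℝ} (sol : EBSolution d (Icc 0 T))
    (hC : condC1 sol ∨ condC2 sol ∨ condC3 sol ∨ condC4 sol) {t : ℝ} (ht : t ∈ Icc 0 T) :
    flux sol (m - 1) t d.L = 0 := by
  have hm := d.one_le_m
  rcases hC with h | h | h | h <;> obtain ⟨h1, h2⟩ := h t ht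
  · simp [flux, h1, h2]
  · have hL : d.L = d.l (m - 1 + 1) := by rw [Nat.sub_add_cancel hm, d.l_last]
    have h3 : sol.Mom (m - 1) t d.L = 0 := by
      rw [hL] at h1 ⊢
      exact sol.mom_right (by omega) ht h1
    simp [flux, h2, h3]
  · simp [flux, h1, h2]
  · simp [flux, h1, h2]

/-! ### Energy balance of the chain -/

/-- Under the dissipative boundary condition (D) at `ζ = 0` (with
`He(K₀) ⪰ 0`), one of the conservative conditions (C) at `ζ = L`, and dissipative
interconnection conditions (I) at all junctions (with `He(Kʲ) ⪰ 0`), the total energy is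
differentiable and non-increasing; more precisely, with `b(t) = (ω¹_tζ(t,0), ω¹_t(t,0))`,
`H′(t) ≤ −Re⟨K₀ b(t), b(t)⟩ ≤ 0` for all `t ∈ [0,T]`. -/
theorem stmt2 {m : ℕ} (d : EBData m) (T : ℝ) (sol : EBSolution d (Icc 0 T))
    (K₀ : Matrix (Fin 2) (Fin 2) ℂ)
    (hK₀ : (((1 : ℂ) / 2) • (K₀ + K₀ᴴ)).PosSemidef)
    (hD : condD sol K₀)
    (hC : condC1 sol ∨ condC2 sol ∨ condC3 sol ∨ condC4 sol)
    (hI : ∀ j ∈ Finset.Ico 1 m, ∃ K : Matrix (Fin 2) (Fin 2) ℂ,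
      (((1 : ℂ) / 2) • (K + Kᴴ)).PosSemidef ∧
        (junctionA sol K j ∨ junctionB sol K j ∨ junctionC sol K j ∨ junctionD sol K j)) :
    ∀ t ∈ Icc (0 : ℝ) T, ∃ h' : ℝ,
      HasDerivWithinAt (fun s => energy sol s) h' (Icc 0 T) t ∧
      h' ≤ -((K₀.mulVec (bvec sol t)) ⬝ᵥ star (bvec sol t)).re ∧
      -((K₀.mulVec (bvec sol t)) ⬝ᵥ star (bvec sol t)).re ≤ 0 := by
  intro t ht
  refine ⟨(1 / 2 : ℝ) * ∑ j ∈ Finset.range m,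
    2 * (flux sol j t (d.l (j + 1)) - flux sol j t (d.l j)), ?_, ?_,
    neg_nonpos.2 (re_mulVec_nonneg hK₀ _)⟩
  · exact (HasDerivWithinAt.fun_sum fun j hj =>
      sol.hasDerivWithinAt_beam (Finset.mem_range.1 hj) ht).const_mul _
  · have hleft : flux sol 0 t (d.l 0) = ((K₀.mulVec (bvec sol t)) ⬝ᵥ star (bvec sol t)).re := by
      rw [← hD t ht, d.l_zero]
      simp [flux, bvec, dotProduct, Fin.sum_univ_two]
      ring
    have hright := sol.flux_right hC ht
    obtain ⟨n, rfl⟩ : ∃ n, m = n + 1 := ⟨m - 1, by have := d.one_le_m; omega⟩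
    rw [Nat.add_sub_cancel, ← d.l_last] at hright
    have hj : ∑ j ∈ Finset.range n,
        (flux sol j t (d.l (j + 1)) - flux sol (j + 1) t (d.l (j + 1))) ≤ 0 := by
      refine Finset.sum_nonpos fun j hj => ?_
      obtain ⟨K, hK, hJ⟩ := hI (j + 1)
        (Finset.mem_Ico.2 ⟨by omega, by have := Finset.mem_range.1 hj; omega⟩)
      exact sol.flux_junction hK hJ ht
    -- regroup the boundary terms of the beams by nodes
    rw [← Finset.mul_sum, Finset.sum_sub_distrib, Finset.sum_range_succ,
      Finset.sum_range_succ' (fun j => flux sol j t (d.l j))]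
    rw [Finset.sum_sub_distrib] at hj
    linarith
end
end

section
/- Let ρ, EI : [0,1] → ℝ be Lipschitz continuous with ρ(ζ) ≥ ε and EI(ζ) ≥ ε for some ε > 0 and all ζ, let β ∈ ℝ with β ≠ 0, and let f, g : [0,1] → ℝ be twice continuously differentiable with f″(ζ) = g(ζ)/EI(ζ) and g″(ζ) = β² ρ(ζ) f(ζ) for all ζ ∈ [0,1]. If f(0) ≥ 0, f′(0) ≥ 0, g(0) ≥ 0 and g′(0) ≥ 0, then either f and g vanish identically on [0,1], or f(ζ) > 0, f′(ζ) > 0, g(ζ) > 0 and g′(ζ) > 0 for every ζ ∈ (0,1]. -/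
open Set

/-!
The quadruple `u = (f, f', g, g')` solves the cyclic first-order system `uᵢ' = cᵢ uᵢ₊₁` with
continuous positive coefficients `c = (1, 1/EI, 1, β² ρ)`.

Nonnegativity propagates (`cyclic_nonneg`): if `C` bounds all `cᵢ` and some `uᵢ` were negative
somewhere, then at a minimum over all indices and all times of `exp(-(C+1)t) uᵢ(t)` the
time derivative would be strictly positive, although it is `≤ 0` at a minimum attained at `t > 0`.

If the initial data vanish, applying this to `u` and `-u` gives `u = 0`. Otherwise some `uᵢ(0) > 0`;
all `uᵢ` are nondecreasing, so `uᵢ > 0` on `(0,1]`, and then `uᵢ₋₁' = cᵢ₋₁ uᵢ > 0` makes `uᵢ₋₁`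
strictly increasing, hence positive on `(0,1]`. Going round the cycle gives all four components.
-/

lemma deriv_nonpos_of_min {v : ℝ → ℝ} {d t : ℝ} (ht : t ∈ Ioc (0:ℝ) 1)
    (hd : HasDerivWithinAt v d (Icc 0 1) t) (hmin : ∀ s ∈ Icc (0:ℝ) 1, v t ≤ v s) : d ≤ 0 := by
  have hsub : Ico 0 t ⊆ Icc (0:ℝ) 1 := fun s hs => ⟨hs.1, hs.2.le.trans ht.2⟩
  have h := (hasDerivWithinAt_iff_tendsto_slope' (by simp)).1 (hd.mono hsub)
  have : (nhdsWithin t (Ico 0 t)).NeBot := by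
    rw [nhdsWithin_Ico_eq_nhdsLT ht.1]; infer_instance
  refine le_of_tendsto h ?_
  filter_upwards [self_mem_nhdsWithin] with s hs
  rw [slope_def_field]
  exact div_nonpos_of_nonneg_of_nonpos (by linarith [hmin s (hsub hs)]) (by linarith [hs.2])

/-- Solutions of `uᵢ' = cᵢ u_{σ i}` with nonnegative continuous coefficients and nonnegative
initial data stay nonnegative. -/
lemma cyclic_nonneg {ι : Type*} [Fintype ι] (σ : ι → ι) (c u : ι → ℝ → ℝ)
    (hc : ∀ i, ContinuousOn (c i) (Icc 0 1)) (hc0 : ∀ i, ∀ t ∈ Icc (0:ℝ) 1, 0 ≤ c i t)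
    (hu : ∀ i, ∀ t ∈ Icc (0:ℝ) 1, HasDerivWithinAt (u i) (c i t * u (σ i) t) (Icc 0 1) t)
    (h0 : ∀ i, 0 ≤ u i 0) : ∀ i, ∀ t ∈ Icc (0:ℝ) 1, 0 ≤ u i t := by
  choose B hB using fun i => isCompact_Icc.exists_bound_of_continuousOn (hc i)
  obtain ⟨C, hC⟩ := (Set.finite_range B).bddAbove
  have hcC : ∀ i, ∀ t ∈ Icc (0:ℝ) 1, c i t ≤ C := fun i t ht =>
    (le_abs_self _).trans ((hB i t ht).trans (hC ⟨i, rfl⟩))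
  have hE : ∀ t, HasDerivAt (fun t : ℝ => Real.exp (-(C + 1) * t))
      (Real.exp (-(C + 1) * t) * (-(C + 1))) t := fun t => by
    simpa using ((hasDerivAt_id t).const_mul (-(C + 1))).exp
  have hv : ∀ i, ∀ t ∈ Icc (0:ℝ) 1,
      HasDerivWithinAt (fun t => Real.exp (-(C + 1) * t) * u i t)
        (Real.exp (-(C + 1) * t) * (-(C + 1)) * u i t +
          Real.exp (-(C + 1) * t) * (c i t * u (σ i) t)) (Icc 0 1) t := fun i t ht =>
    (hE t).hasDerivWithinAt.mul (hu i t ht)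
  choose τ hτ hτmin using fun i => isCompact_Icc.exists_isMinOn (nonempty_Icc.2 zero_le_one)
    (fun t ht => (hv i t ht).continuousWithinAt : ContinuousOn _ (Icc (0:ℝ) 1))
  intro j s hs
  have : Nonempty ι := ⟨j⟩
  obtain ⟨i, hi⟩ := Finite.exists_min fun i => Real.exp (-(C + 1) * τ i) * u i (τ i)
  have hmin : ∀ k, ∀ t ∈ Icc (0:ℝ) 1,
      Real.exp (-(C + 1) * τ i) * u i (τ i) ≤ Real.exp (-(C + 1) * t) * u k t := fun k t ht =>
    (hi k).trans (hτmin k ht)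
  suffices h : 0 ≤ u i (τ i) from
    nonneg_of_mul_nonneg_right ((mul_nonneg (Real.exp_pos _).le h).trans (hmin j s hs))
      (Real.exp_pos _)
  by_contra! hneg
  have hpos : 0 < τ i := lt_of_le_of_ne (hτ i).1 fun h => by
    rw [← h] at hneg; linarith [h0 i]
  have hd := deriv_nonpos_of_min ⟨hpos, (hτ i).2⟩ (hv i _ (hτ i)) (hmin i)
  have hEpos := Real.exp_pos (-(C + 1) * τ i)
  have hσ : u i (τ i) ≤ u (σ i) (τ i) := le_of_mul_le_mul_left (hmin (σ i) _ (hτ i)) hEpos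
  -- At the minimum, `cᵢ u_{σ i} ≥ cᵢ uᵢ ≥ C uᵢ` since `uᵢ < 0`.
  have h1 := mul_le_mul_of_nonneg_left hσ (hc0 i _ (hτ i))
  have h2 := mul_le_mul_of_nonpos_right (hcC i _ (hτ i)) hneg.le
  have h3 : 0 < -(C + 1) * u i (τ i) + c i (τ i) * u (σ i) (τ i) := by linarith
  have h4 := mul_pos hEpos h3
  linarith

/-- Zero-or-positive dichotomy for the cyclic system `uᵢ' = cᵢ uᵢ₊₁`, `i ∈ ℤ/4`, with positive
coefficients. -/
lemma cyclic_dichotomy (c u : Fin 4 → ℝ → ℝ)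
    (hc : ∀ i, ContinuousOn (c i) (Icc 0 1)) (hc0 : ∀ i, ∀ t ∈ Icc (0:ℝ) 1, 0 < c i t)
    (hu : ∀ i, ∀ t ∈ Icc (0:ℝ) 1, HasDerivWithinAt (u i) (c i t * u (i + 1) t) (Icc 0 1) t)
    (h0 : ∀ i, 0 ≤ u i 0) :
    (∀ i, ∀ t ∈ Icc (0:ℝ) 1, u i t = 0) ∨ (∀ i, ∀ t ∈ Ioc (0:ℝ) 1, 0 < u i t) := by
  have hc0' : ∀ i, ∀ t ∈ Icc (0:ℝ) 1, 0 ≤ c i t := fun i t ht => (hc0 i t ht).le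
  have hnn := cyclic_nonneg (· + 1) c u hc hc0' hu h0
  by_cases hz : ∀ i, u i 0 = 0
  · left
    intro i t ht
    have := cyclic_nonneg (· + 1) c (fun i t => -u i t) hc hc0'
      (fun i t ht => by rw [mul_neg]; exact (hu i t ht).neg) (fun i => by simp [hz i]) i t ht
    linarith [hnn i t ht]
  · right
    push Not at hz
    obtain ⟨i, hi⟩ := hz
    have hcont : ∀ i, ContinuousOn (u i) (Icc 0 1) := fun i t ht => (hu i t ht).continuousWithinAt
    have hder : ∀ i, ∀ t ∈ interior (Icc (0:ℝ) 1),
        HasDerivWithinAt (u i) (c i t * u (i + 1) t) (interior (Icc 0 1)) t := fun i t ht =>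
      (hu i t (interior_subset ht)).mono interior_subset
    have hmono : ∀ i, MonotoneOn (u i) (Icc 0 1) := fun i =>
      monotoneOn_of_hasDerivWithinAt_nonneg (convex_Icc 0 1) (hcont i) (hder i) fun t ht =>
        mul_nonneg (hc0' i t (interior_subset ht)) (hnn _ t (interior_subset ht))
    have hstep : ∀ i, (∀ t ∈ Ioc (0:ℝ) 1, 0 < u (i + 1) t) → ∀ t ∈ Ioc (0:ℝ) 1, 0 < u i t := by
      intro i h t ht
      have hs : StrictMonoOn (u i) (Icc 0 1) :=
        strictMonoOn_of_hasDerivWithinAt_pos (convex_Icc 0 1) (hcont i) (hder i) fun t ht =>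
          mul_pos (hc0 i t (interior_subset ht)) (h t (by
            rw [interior_Icc] at ht; exact ⟨ht.1, ht.2.le⟩))
      exact (h0 i).trans_lt (hs (left_mem_Icc.2 zero_le_one) ⟨ht.1.le, ht.2⟩ ht.1)
    have hstart : ∀ t ∈ Ioc (0:ℝ) 1, 0 < u i t := fun t ht =>
      (lt_of_le_of_ne (h0 i) hi.symm).trans_le
        (hmono i (left_mem_Icc.2 zero_le_one) ⟨ht.1.le, ht.2⟩ ht.1.le)
    have s0 := hstep 0
    have s1 := hstep 1
    have s2 := hstep 2
    have s3 := hstep 3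
    simp only [Fin.reduceAdd] at s0 s1 s2 s3
    intro j
    fin_cases i <;> fin_cases j <;> simp only [Fin.zero_eta, Fin.mk_one, Fin.reduceFinMk]
      at hstart ⊢ <;> tauto

/-- Positivity propagation for the real reduction `f″ = g/EI`,
`g″ = β² ρ f` of the Euler–Bernoulli eigenvalue system on a single beam `[0,1]`:
if `f(0), f′(0), g(0), g′(0) ≥ 0` then either `f ≡ g ≡ 0` on `[0,1]`, or all four of
`f, f′, g, g′` are strictly positive on `(0,1]`. -/
theorem stmt10 (ρ EI : ℝ → ℝ) (ε : ℝ) (hε : 0 < ε)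
    (hρlb : ∀ ζ ∈ Icc (0:ℝ) 1, ε ≤ ρ ζ) (hEIlb : ∀ ζ ∈ Icc (0:ℝ) 1, ε ≤ EI ζ)
    (hρlip : ∃ K : NNReal, LipschitzOnWith K ρ (Icc (0:ℝ) 1))
    (hEIlip : ∃ K : NNReal, LipschitzOnWith K EI (Icc (0:ℝ) 1))
    (β : ℝ) (hβ : β ≠ 0)
    (f g f' g' f'' g'' : ℝ → ℝ)
    (hf' : ∀ ζ ∈ Icc (0:ℝ) 1, HasDerivWithinAt f (f' ζ) (Icc (0:ℝ) 1) ζ)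
    (hf'' : ∀ ζ ∈ Icc (0:ℝ) 1, HasDerivWithinAt f' (f'' ζ) (Icc (0:ℝ) 1) ζ)
    (hg' : ∀ ζ ∈ Icc (0:ℝ) 1, HasDerivWithinAt g (g' ζ) (Icc (0:ℝ) 1) ζ)
    (hg'' : ∀ ζ ∈ Icc (0:ℝ) 1, HasDerivWithinAt g' (g'' ζ) (Icc (0:ℝ) 1) ζ)
    (hf''c : ContinuousOn f'' (Icc (0:ℝ) 1)) (hg''c : ContinuousOn g'' (Icc (0:ℝ) 1))
    (heqf : ∀ ζ ∈ Icc (0:ℝ) 1, f'' ζ = g ζ / EI ζ)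
    (heqg : ∀ ζ ∈ Icc (0:ℝ) 1, g'' ζ = β ^ 2 * ρ ζ * f ζ)
    (hf0 : 0 ≤ f 0) (hf'0 : 0 ≤ f' 0) (hg0 : 0 ≤ g 0) (hg'0 : 0 ≤ g' 0) :
    (∀ ζ ∈ Icc (0:ℝ) 1, f ζ = 0 ∧ g ζ = 0) ∨
      (∀ ζ ∈ Ioc (0:ℝ) 1, 0 < f ζ ∧ 0 < f' ζ ∧ 0 < g ζ ∧ 0 < g' ζ) := by
  obtain ⟨K, hK⟩ := hρlip
  obtain ⟨L, hL⟩ := hEIlip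
  have hEIpos : ∀ ζ ∈ Icc (0:ℝ) 1, 0 < EI ζ := fun ζ hζ => hε.trans_le (hEIlb ζ hζ)
  have hρpos : ∀ ζ ∈ Icc (0:ℝ) 1, 0 < ρ ζ := fun ζ hζ => hε.trans_le (hρlb ζ hζ)
  have key := cyclic_dichotomy ![fun _ => 1, fun ζ => (EI ζ)⁻¹, fun _ => 1, fun ζ => β ^ 2 * ρ ζ]
    ![f, f', g, g'] ?_ ?_ ?_ ?_
  · rcases key with h | h
    · exact Or.inl fun ζ hζ => ⟨h 0 ζ hζ, h 2 ζ hζ⟩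
    · exact Or.inr fun ζ hζ => ⟨h 0 ζ hζ, h 1 ζ hζ, h 2 ζ hζ, h 3 ζ hζ⟩
  · intro i
    fin_cases i
    · exact continuousOn_const
    · exact hL.continuousOn.inv₀ fun ζ hζ => (hEIpos ζ hζ).ne'
    · exact continuousOn_const
    · exact continuousOn_const.mul hK.continuousOn
  · intro i ζ hζ
    have h1 := hEIpos ζ hζ
    have h2 := hρpos ζ hζ
    fin_cases i
    · exact one_pos
    · exact inv_pos.2 h1
    · exact one_pos
    · exact mul_pos (by positivity) h2
  · intro i ζ hζ
    fin_cases i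
    · simpa using hf' ζ hζ
    · have h := hf'' ζ hζ
      rw [heqf ζ hζ, div_eq_inv_mul] at h
      exact h
    · simpa using hg' ζ hζ
    · have h := hg'' ζ hζ
      rw [heqg ζ hζ] at h
      exact h
  · intro i
    fin_cases i
    exacts [hf0, hf'0, hg0, hg'0]
end
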